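/- arXiv:2108.06630 — 7 statements merged into one kernel-verified Lean document; each statement's English description precedes it below -/
import Mathlib

section
/- Let N ≥ 2 be an integer, h > 0, and let (l,m) be an interior index (1 ≤ l,m ≤ N−1). Then there exists a unique grid function G satisfying the homogeneous Dirichlet boundary condition such that (A_h G)_{i,j} = 1/h² when (i,j) = (l,m) and (A_h G)_{i,j} = 0 at all other interior indices 1 ≤ i,j ≤ N−1; that is, the Dirichlet discrete Green function centered at (l,m) exists and is unique. -/
/-- The five-point discrete Laplacian acting on grid functions, at interior
indices `1 ≤ i, j ≤ N-1`. -/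
noncomputable def fivePointLaplacian (h : ℝ) (U : ℕ → ℕ → ℝ) (i j : ℕ) : ℝ :=
  (U (i - 1) j + U (i + 1) j + U i (j - 1) + U i (j + 1) - 4 * U i j) / h ^ 2

/-- A grid function on `{0,…,N} × {0,…,N}` satisfies the homogeneous Dirichlet
boundary condition if it vanishes whenever `i ∈ {0, N}` or `j ∈ {0, N}`. -/
def DirichletBC (N : ℕ) (U : ℕ → ℕ → ℝ) : Prop :=
  ∀ i j, i ≤ N → j ≤ N → (i = 0 ∨ i = N ∨ j = 0 ∨ j = N) → U i j = 0

/-- `G` is the Dirichlet discrete Green function centered at the interior index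
`(l,m)`: it satisfies the homogeneous Dirichlet boundary condition, and
`(A_h G)_{i,j}` is `1/h²` at `(l,m)` and `0` at all other interior indices. -/
def IsDiscreteGreen (N : ℕ) (h : ℝ) (l m : ℕ) (G : ℕ → ℕ → ℝ) : Prop :=
  DirichletBC N G ∧
  ∀ i j, 1 ≤ i → i ≤ N - 1 → 1 ≤ j → j ≤ N - 1 →
    fivePointLaplacian h G i j = if i = l ∧ j = m then 1 / h ^ 2 else 0

/-!
At an interior maximum of a function with `A_h U ≥ 0` all four neighbours attain the maximum as
well, so walking left one reaches the boundary: this is the discrete maximum principle. By linearity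
it yields comparison, hence uniqueness, for the discrete Poisson problem. On the finite grid the
problem is a square linear system, so uniqueness gives existence for arbitrary source and boundary
data; the Green function is the solution with zero boundary values and source `1/h²` at `(l,m)`.
-/

section DiscretePoisson

variable {N : ℕ} {h : ℝ} {U V f g f' g' : ℕ → ℕ → ℝ}

theorem fivePointLaplacian_sub (h : ℝ) (U V : ℕ → ℕ → ℝ) (i j : ℕ) :
    fivePointLaplacian h (U - V) i j = fivePointLaplacian h U i j - fivePointLaplacian h V i j := by
  simp only [fivePointLaplacian, Pi.sub_apply]
  ring

theorem lt_of_fivePointLaplacian_nonneg {i j : ℕ} {M : ℝ} (hh : h ≠ 0)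
    (hU : 0 ≤ fivePointLaplacian h U i j) (hleft : U (i - 1) j < M) (hright : U (i + 1) j ≤ M)
    (hdown : U i (j - 1) ≤ M) (hup : U i (j + 1) ≤ M) : U i j < M := by
  have hsum : 0 ≤ U (i - 1) j + U (i + 1) j + U i (j - 1) + U i (j + 1) - 4 * U i j := by
    simpa only [fivePointLaplacian, le_div_iff₀ (sq_pos_of_ne_zero hh), zero_mul] using hU
  linarith

theorem le_of_fivePointLaplacian_nonneg {c : ℝ} (hh : h ≠ 0)
    (hU : ∀ i j, 1 ≤ i → i ≤ N - 1 → 1 ≤ j → j ≤ N - 1 → 0 ≤ fivePointLaplacian h U i j)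
    (hbdry : ∀ i j, i ≤ N → j ≤ N → (i = 0 ∨ i = N ∨ j = 0 ∨ j = N) → U i j ≤ c)
    {i j : ℕ} (hi : i ≤ N) (hj : j ≤ N) : U i j ≤ c := by
  obtain ⟨⟨a, b⟩, hmax⟩ := Finite.exists_max fun p : Fin (N + 1) × Fin (N + 1) ↦ U p.1 p.2
  have le_max {k l : ℕ} (hk : k ≤ N) (hl : l ≤ N) : U k l ≤ U a b :=
    hmax (⟨k, by omega⟩, ⟨l, by omega⟩)
  by_contra! hc
  have bdry_lt_max {k l : ℕ} (hk : k ≤ N) (hl : l ≤ N) (hkl : k = 0 ∨ k = N ∨ l = 0 ∨ l = N) :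
      U k l < U a b :=
    (hbdry k l hk hl hkl).trans_lt (hc.trans_le (le_max hi hj))
  have lt_max (k : ℕ) : k ≤ N → ∀ l ≤ N, U k l < U a b := by
    induction k with
    | zero => exact fun hk l hl ↦ bdry_lt_max hk hl (.inl rfl)
    | succ k ih =>
      intro hk l hl
      by_cases hkl : k + 1 = N ∨ l = 0 ∨ l = N
      · exact bdry_lt_max hk hl (.inr hkl)
      · exact lt_of_fivePointLaplacian_nonneg hh
          (hU (k + 1) l (by omega) (by omega) (by omega) (by omega)) (ih (by omega) l hl)
          (le_max (by omega) hl) (le_max hk (by omega)) (le_max hk (by omega))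
  exact (lt_max a (by omega) b (by omega)).false

/-- `U` solves the discrete Poisson problem on `{0,…,N} × {0,…,N}` with source `f` and Dirichlet
data `g`: `A_h U = f` at interior indices and `U = g` on the boundary. Only the interior values of
`f` and the boundary values of `g` matter. -/
def IsDiscretePoissonSolution (N : ℕ) (h : ℝ) (f g U : ℕ → ℕ → ℝ) : Prop :=
  (∀ i j, i ≤ N → j ≤ N → (i = 0 ∨ i = N ∨ j = 0 ∨ j = N) → U i j = g i j) ∧
  ∀ i j, 1 ≤ i → i ≤ N - 1 → 1 ≤ j → j ≤ N - 1 → fivePointLaplacian h U i j = f i j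

namespace IsDiscretePoissonSolution

theorem comparison (hh : h ≠ 0) (hU : IsDiscretePoissonSolution N h f g U)
    (hV : IsDiscretePoissonSolution N h f' g' V)
    (hf : ∀ i j, 1 ≤ i → i ≤ N - 1 → 1 ≤ j → j ≤ N - 1 → f' i j ≤ f i j)
    (hg : ∀ i j, i ≤ N → j ≤ N → (i = 0 ∨ i = N ∨ j = 0 ∨ j = N) → g i j ≤ g' i j)
    {i j : ℕ} (hi : i ≤ N) (hj : j ≤ N) : U i j ≤ V i j := by
  refine sub_nonpos.mp (le_of_fivePointLaplacian_nonneg (U := U - V) hh ?_ ?_ hi hj)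
  · intro i j hi₁ hi₂ hj₁ hj₂
    rw [fivePointLaplacian_sub, hU.2 i j hi₁ hi₂ hj₁ hj₂, hV.2 i j hi₁ hi₂ hj₁ hj₂]
    exact sub_nonneg.mpr (hf i j hi₁ hi₂ hj₁ hj₂)
  · intro i j hi hj hij
    rw [Pi.sub_apply, Pi.sub_apply, hU.1 i j hi hj hij, hV.1 i j hi hj hij]
    exact sub_nonpos.mpr (hg i j hi hj hij)

theorem unique (hh : h ≠ 0) (hU : IsDiscretePoissonSolution N h f g U)
    (hV : IsDiscretePoissonSolution N h f g V) {i j : ℕ} (hi : i ≤ N) (hj : j ≤ N) :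
    U i j = V i j :=
  le_antisymm
    (hU.comparison hh hV (fun _ _ _ _ _ _ ↦ le_rfl) (fun _ _ _ _ _ ↦ le_rfl) hi hj)
    (hV.comparison hh hU (fun _ _ _ _ _ _ ↦ le_rfl) (fun _ _ _ _ _ ↦ le_rfl) hi hj)

end IsDiscretePoissonSolution

/-- Extension of a function on the finite grid to all pairs of indices, as needed to apply
`fivePointLaplacian`. It is chosen periodic of period `N + 1`; the values off the grid are never
seen by the discrete Poisson problem. -/
def gridExtend {N : ℕ} (u : Fin (N + 1) → Fin (N + 1) → ℝ) (i j : ℕ) : ℝ :=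
  u (Fin.ofNat (N + 1) i) (Fin.ofNat (N + 1) j)

/-- The function on the finite grid equal to `f` at interior indices and to `g` on the boundary:
the combined data of a discrete Poisson problem. -/
def gridData (N : ℕ) (f g : ℕ → ℕ → ℝ) (i j : Fin (N + 1)) : ℝ :=
  if (i : ℕ) = 0 ∨ (i : ℕ) = N ∨ (j : ℕ) = 0 ∨ (j : ℕ) = N then g i j else f i j

theorem gridData_eq_gridData_iff :
    gridData N f g = gridData N f' g' ↔
      (∀ i j, i ≤ N → j ≤ N → (i = 0 ∨ i = N ∨ j = 0 ∨ j = N) → g i j = g' i j) ∧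
      ∀ i j, 1 ≤ i → i ≤ N - 1 → 1 ≤ j → j ≤ N - 1 → f i j = f' i j := by
  constructor
  · intro heq
    have heq_at {i j : ℕ} (hi : i ≤ N) (hj : j ≤ N) :=
      congr_fun₂ heq ⟨i, Nat.lt_succ_of_le hi⟩ ⟨j, Nat.lt_succ_of_le hj⟩
    refine ⟨fun i j hi hj hij ↦ ?_, fun i j hi₁ hi₂ hj₁ hj₂ ↦ ?_⟩
    · simpa only [gridData, if_pos hij] using heq_at hi hj
    · have hij : ¬(i = 0 ∨ i = N ∨ j = 0 ∨ j = N) := by omega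
      simpa only [gridData, if_neg hij] using heq_at (i := i) (j := j) (by omega) (by omega)
  · rintro ⟨hg, hf⟩
    ext i j
    unfold gridData
    split_ifs with hij
    · exact hg i j (by omega) (by omega) hij
    · exact hf i j (by omega) (by omega) (by omega) (by omega)

/-- The operator of the discrete Poisson problem, sending a function on the finite grid to its
five-point Laplacian at interior indices and to its own values on the boundary. -/
noncomputable def poissonOperator (N : ℕ) (h : ℝ) :
    (Fin (N + 1) → Fin (N + 1) → ℝ) →ₗ[ℝ] (Fin (N + 1) → Fin (N + 1) → ℝ) where
  toFun u := gridData N (fivePointLaplacian h (gridExtend u)) (gridExtend u)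
  map_add' u v := by
    ext i j
    simp only [gridData, fivePointLaplacian, gridExtend, Pi.add_apply]
    split_ifs <;> ring
  map_smul' c u := by
    ext i j
    simp only [gridData, fivePointLaplacian, gridExtend, Pi.smul_apply, smul_eq_mul,
      RingHom.id_apply]
    split_ifs <;> ring

theorem poissonOperator_eq_gridData_iff {u : Fin (N + 1) → Fin (N + 1) → ℝ} :
    poissonOperator N h u = gridData N f g ↔
      IsDiscretePoissonSolution N h f g (gridExtend u) :=
  gridData_eq_gridData_iff

theorem poissonOperator_injective (N : ℕ) (hh : h ≠ 0) :
    Function.Injective (poissonOperator N h) := by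
  intro u v huv
  have hu : IsDiscretePoissonSolution N h (fivePointLaplacian h (gridExtend v)) (gridExtend v)
      (gridExtend u) := poissonOperator_eq_gridData_iff.mp huv
  have hv : IsDiscretePoissonSolution N h (fivePointLaplacian h (gridExtend v)) (gridExtend v)
      (gridExtend v) := poissonOperator_eq_gridData_iff.mp rfl
  ext i j
  simpa only [gridExtend, Fin.ofNat_val_eq_self] using hu.unique hh hv i.is_le j.is_le

theorem exists_isDiscretePoissonSolution (N : ℕ) (hh : h ≠ 0) (f g : ℕ → ℕ → ℝ) :
    ∃ U, IsDiscretePoissonSolution N h f g U := by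
  obtain ⟨u, hu⟩ := LinearMap.surjective_of_injective (poissonOperator_injective N hh)
    (gridData N f g)
  exact ⟨gridExtend u, poissonOperator_eq_gridData_iff.mp hu⟩

theorem discreteGreen_exists_unique_general (N : ℕ) {h : ℝ} (hh : h ≠ 0) (f g : ℕ → ℕ → ℝ) :
    ∃ U : ℕ → ℕ → ℝ, IsDiscretePoissonSolution N h f g U ∧
      ∀ U' : ℕ → ℕ → ℝ, IsDiscretePoissonSolution N h f g U' →
        ∀ i j, i ≤ N → j ≤ N → U' i j = U i j := by
  obtain ⟨U, hU⟩ := exists_isDiscretePoissonSolution N hh f g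
  exact ⟨U, hU, fun U' hU' i j hi hj ↦ hU'.unique hh hU hi hj⟩

end DiscretePoisson

/-- Existence and uniqueness of the Dirichlet discrete Green function centered
at an interior index `(l,m)`. -/
theorem discreteGreen_exists_unique (N : ℕ) (hN : 2 ≤ N) (h : ℝ) (hh : 0 < h)
    (l m : ℕ) (hl1 : 1 ≤ l) (hl2 : l ≤ N - 1) (hm1 : 1 ≤ m) (hm2 : m ≤ N - 1) :
    ∃ G : ℕ → ℕ → ℝ, IsDiscreteGreen N h l m G ∧
      ∀ G' : ℕ → ℕ → ℝ, IsDiscreteGreen N h l m G' →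
        ∀ i j, i ≤ N → j ≤ N → G' i j = G i j :=
  discreteGreen_exists_unique_general N hh.ne' (fun i j ↦ if i = l ∧ j = m then 1 / h ^ 2 else 0) 0
end

section
/- Let N ≥ 2 be an integer and h > 0, and let U be a grid function such that (A_h U)_{i,j} = 0 at every interior index 1 ≤ i,j ≤ N−1, and which satisfies the discrete homogeneous Neumann boundary conditions: U_{0,j} = U_{1,j} and U_{N,j} = U_{N−1,j} for all 0 ≤ j ≤ N, and U_{i,0} = U_{i,1} and U_{i,N} = U_{i,N−1} for all 0 ≤ i ≤ N. Then U is constant. In particular, a solution of the discrete Neumann problem normalized by U_{1,1} = 0 is unique. -/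
/-!
A subharmonic grid function is at most the average of its four neighbours at every interior index,
so where it attains its maximum at an interior index, all four neighbours share that value, and the
value spreads along grid lines to the whole interior. The Neumann conditions say that every boundary
value is also taken at an adjacent index one step inwards; hence the maximum is attained in the
interior, and constancy on the interior gives constancy on the whole grid.
-/

theorem forall_le_of_forall_neighbors {n a : ℕ} {P : ℕ → Prop} (ha : a ∈ Set.Ioo 0 n) (hPa : P a)
    (hstep : ∀ i ∈ Set.Ioo 0 n, P i → P (i - 1) ∧ P (i + 1)) : ∀ i ≤ n, P i := by
  obtain ⟨ha0, han⟩ := ha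
  intro i hi
  rcases le_total a i with hai | hia
  · induction i, hai using Nat.le_induction with
    | base => exact hPa
    | succ i hai ih => exact (hstep i ⟨by omega, by omega⟩ (ih (by omega))).2
  · induction hia using Nat.decreasingInduction with
    | self => exact hPa
    | of_succ i hia ih => exact (hstep (i + 1) ⟨by omega, by omega⟩ (ih (by omega))).1

section MaximumPrinciple

variable {h : ℝ} {U : ℕ → ℕ → ℝ} {m n i j a b : ℕ}

theorem fivePointLaplacian_nonneg_iff (hh : h ≠ 0) :
    0 ≤ fivePointLaplacian h U i j ↔
      4 * U i j ≤ U (i - 1) j + U (i + 1) j + U i (j - 1) + U i (j + 1) := by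
  rw [fivePointLaplacian, le_div_iff₀ (by positivity), zero_mul, sub_nonneg]

theorem neighbors_eq_of_fivePointLaplacian_nonneg (hh : h ≠ 0)
    (hsub : 0 ≤ fivePointLaplacian h U i j)
    (hleft : U (i - 1) j ≤ U i j) (hright : U (i + 1) j ≤ U i j)
    (hdown : U i (j - 1) ≤ U i j) (hup : U i (j + 1) ≤ U i j) :
    (U (i - 1) j = U i j ∧ U (i + 1) j = U i j) ∧
      (U i (j - 1) = U i j ∧ U i (j + 1) = U i j) := by
  have hmean := (fivePointLaplacian_nonneg_iff hh).1 hsub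
  refine ⟨⟨?_, ?_⟩, ?_, ?_⟩ <;> linarith

/-- Discrete subharmonicity, `A_h U ≥ 0`, at the interior indices of `{0, …, m} × {0, …, n}`. -/
def IsDiscreteSubharmonic (m n : ℕ) (h : ℝ) (U : ℕ → ℕ → ℝ) : Prop :=
  ∀ i ∈ Set.Ioo 0 m, ∀ j ∈ Set.Ioo 0 n, 0 ≤ fivePointLaplacian h U i j

theorem IsDiscreteSubharmonic.eq_of_forall_le (hU : IsDiscreteSubharmonic m n h U) (hh : h ≠ 0)
    (ha : a ∈ Set.Ioo 0 m) (hb : b ∈ Set.Ioo 0 n) (hmax : ∀ i ≤ m, ∀ j ≤ n, U i j ≤ U a b)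
    (hi : i ∈ Set.Ioo 0 m) (hj : j ∈ Set.Ioo 0 n) : U i j = U a b := by
  have hspread : ∀ k ∈ Set.Ioo 0 m, ∀ l ∈ Set.Ioo 0 n, U k l = U a b →
      (U (k - 1) l = U a b ∧ U (k + 1) l = U a b) ∧
        (U k (l - 1) = U a b ∧ U k (l + 1) = U a b) := by
    intro k hk l hl hkl
    have hneighbors := neighbors_eq_of_fivePointLaplacian_nonneg hh (hU k hk l hl)
    rw [hkl] at hneighbors
    obtain ⟨-, hkm⟩ := hk
    obtain ⟨-, hln⟩ := hl
    exact hneighbors (hmax _ (by omega) _ (by omega)) (hmax _ (by omega) _ (by omega))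
      (hmax _ (by omega) _ (by omega)) (hmax _ (by omega) _ (by omega))
  have hrow : U i b = U a b :=
    forall_le_of_forall_neighbors (P := fun k => U k b = U a b) ha rfl
      (fun k hk hkb => (hspread k hk b hb hkb).1) i hi.2.le
  exact forall_le_of_forall_neighbors (P := fun l => U i l = U a b) hb hrow
    (fun l hl hil => (hspread i hi l hl hil).2) j hj.2.le

end MaximumPrinciple

section Neumann

variable {α : Type*} {m n i j : ℕ}

/-- The index of `{1, …, n - 1}` nearest to `i`; it moves the end points `0` and `n` of
`{0, …, n}` one step inwards. Meaningful for `2 ≤ n`. -/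
def interiorClamp (n i : ℕ) : ℕ :=
  max 1 (min i (n - 1))

theorem interiorClamp_mem_Ioo (hn : 2 ≤ n) (i : ℕ) : interiorClamp n i ∈ Set.Ioo 0 n := by
  simp only [interiorClamp, Set.mem_Ioo]
  omega

theorem apply_interiorClamp {f : ℕ → α} (hn : 2 ≤ n) (hzero : f 0 = f 1) (hlast : f n = f (n - 1))
    (hi : i ≤ n) : f (interiorClamp n i) = f i := by
  obtain rfl | rfl | ⟨hpos, hlt⟩ : i = 0 ∨ i = n ∨ 0 < i ∧ i < n := by omega
  · rw [hzero, show interiorClamp n 0 = 1 by simp [interiorClamp]]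
  · rw [hlast, show interiorClamp i i = i - 1 by simp only [interiorClamp]; omega]
  · rw [show interiorClamp n i = i by simp only [interiorClamp]; omega]

/-- The discrete homogeneous Neumann boundary conditions on `{0, …, m} × {0, …, n}`, corners
included: `U` does not change between a boundary index and the adjacent index inwards. -/
structure IsDiscreteNeumann (m n : ℕ) (U : ℕ → ℕ → α) : Prop where
  horizontal : ∀ j ≤ n, U 0 j = U 1 j ∧ U m j = U (m - 1) j
  vertical : ∀ i ≤ m, U i 0 = U i 1 ∧ U i n = U i (n - 1)

theorem IsDiscreteNeumann.apply_interiorClamp {U : ℕ → ℕ → α} (hU : IsDiscreteNeumann m n U)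
    (hm : 2 ≤ m) (hn : 2 ≤ n) (hi : i ≤ m) (hj : j ≤ n) :
    U (interiorClamp m i) (interiorClamp n j) = U i j := by
  have hclamp : interiorClamp n j ≤ n := (interiorClamp_mem_Ioo hn j).2.le
  obtain ⟨hleft, hright⟩ := hU.horizontal _ hclamp
  obtain ⟨hbottom, htop⟩ := hU.vertical i hi
  calc U (interiorClamp m i) (interiorClamp n j)
      = U i (interiorClamp n j) :=
        _root_.apply_interiorClamp (f := fun k => U k (interiorClamp n j)) hm hleft hright hi
    _ = U i j := _root_.apply_interiorClamp hn hbottom htop hj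

end Neumann

theorem exists_forall_le_on_grid {α : Type*} [LinearOrder α] (m n : ℕ) (U : ℕ → ℕ → α) :
    ∃ a ≤ m, ∃ b ≤ n, ∀ i ≤ m, ∀ j ≤ n, U i j ≤ U a b := by
  obtain ⟨⟨a, b⟩, ⟨ha, hb⟩, hmax⟩ := Set.exists_max_image (Set.Iic m ×ˢ Set.Iic n)
    (fun p => U p.1 p.2) ((Set.finite_Iic m).prod (Set.finite_Iic n)) ⟨(0, 0), by simp⟩
  exact ⟨a, ha, b, hb, fun i hi j hj => hmax (i, j) ⟨hi, hj⟩⟩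

theorem discreteNeumann_harmonic_constant_general {m n : ℕ} (hm : 2 ≤ m) (hn : 2 ≤ n) {h : ℝ}
    (hh : h ≠ 0) {U : ℕ → ℕ → ℝ} (hsub : IsDiscreteSubharmonic m n h U)
    (hbc : IsDiscreteNeumann m n U) {i j : ℕ} (hi : i ≤ m) (hj : j ≤ n) : U i j = U 1 1 := by
  obtain ⟨a, ha, b, hb, hmax⟩ := exists_forall_le_on_grid m n U
  rw [← hbc.apply_interiorClamp hm hn ha hb] at hmax
  have hinterior : ∀ k ∈ Set.Ioo 0 m, ∀ l ∈ Set.Ioo 0 n,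
      U k l = U (interiorClamp m a) (interiorClamp n b) := fun k hk l hl =>
    hsub.eq_of_forall_le hh (interiorClamp_mem_Ioo hm a) (interiorClamp_mem_Ioo hn b) hmax hk hl
  calc U i j = U (interiorClamp m i) (interiorClamp n j) :=
        (hbc.apply_interiorClamp hm hn hi hj).symm
    _ = U (interiorClamp m a) (interiorClamp n b) :=
        hinterior _ (interiorClamp_mem_Ioo hm i) _ (interiorClamp_mem_Ioo hn j)
    _ = U 1 1 := (hinterior 1 ⟨one_pos, hm⟩ 1 ⟨one_pos, hn⟩).symm

/-- A discrete harmonic grid function satisfying the discrete homogeneous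
Neumann boundary conditions is constant; in particular the solution of the
discrete Neumann problem normalized by `U 1 1 = 0` is unique (it vanishes). -/
theorem discreteNeumann_harmonic_constant (N : ℕ) (hN : 2 ≤ N) (h : ℝ) (hh : 0 < h)
    (U : ℕ → ℕ → ℝ)
    (hharm : ∀ i j, 1 ≤ i → i ≤ N - 1 → 1 ≤ j → j ≤ N - 1 →
      fivePointLaplacian h U i j = 0)
    (hbcx : ∀ j, j ≤ N → U 0 j = U 1 j ∧ U N j = U (N - 1) j)
    (hbcy : ∀ i, i ≤ N → U i 0 = U i 1 ∧ U i N = U i (N - 1)) :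
    (∃ c : ℝ, ∀ i j, i ≤ N → j ≤ N → U i j = c) ∧
    (U 1 1 = 0 → ∀ i j, i ≤ N → j ≤ N → U i j = 0) := by
  have hsub : IsDiscreteSubharmonic N N h U := fun i hi j hj =>
    (hharm i j hi.1 (Nat.le_sub_one_of_lt hi.2) hj.1 (Nat.le_sub_one_of_lt hj.2)).ge
  have hconst : ∀ i j, i ≤ N → j ≤ N → U i j = U 1 1 := fun _ _ =>
    discreteNeumann_harmonic_constant_general hN hN hh.ne' hsub ⟨hbcx, hbcy⟩
  exact ⟨⟨U 1 1, hconst⟩, fun h11 i j hi hj => (hconst i j hi hj).trans h11⟩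
end

section
/- Let h > 0, M ≥ 0, X ∈ ℝ, and let f : ℝ → ℝ be Lipschitz continuous with Lipschitz constant M. Then |∫_ℝ f(x)·δ¹_h(x − X) dx − f(X)| ≤ M·h/4 (consistency of the discrete delta function δ¹_h against Lipschitz test functions). -/
open MeasureTheory

/-!
Integrating against `δ¹_h(· - X)` averages over the closed ball of radius `h / 2` about `X`. On
that ball `f` differs from `f X` by at most `M * |x - X|`, and the mean distance to the centre is
`h / 4`.
-/

/-- The discrete delta function `δ¹_h` of width `h`: the uniform density on `[-h / 2, h / 2]`. -/
noncomputable def discreteDelta (h x : ℝ) : ℝ :=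
  if |x| ≤ h / 2 then 1 / h else 0

theorem setIntegral_closedBall_abs_sub {c r : ℝ} (hr : 0 ≤ r) :
    ∫ x in Metric.closedBall c r, |x - c| = r ^ 2 := by
  have left_half : ∫ x in Set.Ioc (c - r) c, |x - c| = r ^ 2 / 2 := by
    simpa [Set.uIoc_of_ge, hr, one_add_one_eq_two] using
      integral_pow_abs_sub_uIoc (a := c) (b := c - r) 1
  have right_half : ∫ x in Set.Ioc c (c + r), |x - c| = r ^ 2 / 2 := by
    simpa [Set.uIoc_of_le, hr, one_add_one_eq_two] using
      integral_pow_abs_sub_uIoc (a := c) (b := c + r) 1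
  have integrableOn_Ioc (a b : ℝ) : IntegrableOn (fun x ↦ |x - c|) (Set.Ioc a b) :=
    Continuous.integrableOn_Ioc (by fun_prop)
  rw [Real.closedBall_eq_Icc, integral_Icc_eq_integral_Ioc,
    ← Set.Ioc_union_Ioc_eq_Ioc (sub_le_self c hr) (le_add_of_nonneg_right hr),
    setIntegral_union (Set.Ioc_disjoint_Ioc_of_le le_rfl) measurableSet_Ioc
      (integrableOn_Ioc _ _) (integrableOn_Ioc _ _),
    left_half, right_half, add_halves]

theorem setAverage_closedBall_abs_sub {c r : ℝ} (hr : 0 ≤ r) :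
    ⨍ x in Metric.closedBall c r, |x - c| = r / 2 := by
  rw [setAverage_eq, setIntegral_closedBall_abs_sub hr, Real.volume_real_closedBall hr, smul_eq_mul]
  field_simp

section NormedSpace

variable {E : Type*} [NormedAddCommGroup E] [NormedSpace ℝ E]

theorem norm_average_sub_le_of_norm_sub_le [CompleteSpace E] {α : Type*} {m : MeasurableSpace α}
    {μ : Measure α} [IsFiniteMeasure μ] [NeZero μ] {f : α → E} {g : α → ℝ} {c : E}
    (hf : Integrable f μ) (hg : Integrable g μ) (hfg : ∀ᵐ x ∂μ, ‖f x - c‖ ≤ g x) :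
    ‖(⨍ x, f x ∂μ) - c‖ ≤ ⨍ x, g x ∂μ := by
  have average_sub_const : (⨍ x, f x ∂μ) - c = ⨍ x, (f x - c) ∂μ := by
    nth_rw 1 [← average_const μ c]
    exact (integral_sub hf.to_average (integrable_const c)).symm
  rw [average_sub_const]
  exact norm_integral_le_of_norm_le hg.to_average (Measure.ae_smul_measure hfg _)

theorem integral_discreteDelta_smul {h : ℝ} (hh : 0 ≤ h) (X : ℝ) (f : ℝ → E) :
    ∫ x, discreteDelta h (x - X) • f x = ⨍ x in Metric.closedBall X (h / 2), f x := by
  have smul_eq_indicator (x : ℝ) : discreteDelta h (x - X) • f x =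
      (Metric.closedBall X (h / 2)).indicator (fun y ↦ h⁻¹ • f y) x := by
    classical simp [discreteDelta, Set.indicator_apply, Real.dist_eq]
  simp_rw [smul_eq_indicator]
  rw [integral_indicator Metric.isClosed_closedBall.measurableSet, integral_smul, setAverage_eq,
    Real.volume_real_closedBall (div_nonneg hh zero_le_two), mul_div_cancel₀ h two_ne_zero]

end NormedSpace

theorem discreteDelta_consistency_lipschitz_general {E : Type*} [NormedAddCommGroup E]
    [NormedSpace ℝ E] [CompleteSpace E] {h M X : ℝ} (hh : 0 < h) {f : ℝ → E}
    (hf : IntegrableOn f (Metric.closedBall X (h / 2)))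
    (hfX : ∀ x ∈ Metric.closedBall X (h / 2), ‖f x - f X‖ ≤ M * |x - X|) :
    ‖(∫ x, discreteDelta h (x - X) • f x) - f X‖ ≤ M * h / 4 := by
  set B := Metric.closedBall X (h / 2)
  have : NeZero (volume.restrict B) :=
    ⟨Measure.restrict_eq_zero.not.mpr (Metric.measure_closedBall_pos volume X (half_pos hh)).ne'⟩
  have : IsFiniteMeasure (volume.restrict B) :=
    isFiniteMeasure_restrict.mpr measure_closedBall_lt_top.ne
  have bound_integrable : IntegrableOn (fun x ↦ M * |x - X|) B :=
    ContinuousOn.integrableOn_compact (isCompact_closedBall X (h / 2)) (by fun_prop)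
  calc ‖(∫ x, discreteDelta h (x - X) • f x) - f X‖
      = ‖(⨍ x in B, f x) - f X‖ := by rw [integral_discreteDelta_smul hh.le]
    _ ≤ ⨍ x in B, M * |x - X| :=
      norm_average_sub_le_of_norm_sub_le hf bound_integrable
        (ae_restrict_of_forall_mem Metric.isClosed_closedBall.measurableSet hfX)
    _ = M * ⨍ x in B, |x - X| := integral_const_mul M _
    _ = M * h / 4 := by rw [setAverage_closedBall_abs_sub (half_pos hh).le]; ring

/-- Consistency of the discrete delta function `δ¹_h` against Lipschitz test
functions: `|∫ f(x) δ¹_h(x − X) dx − f(X)| ≤ M h / 4` whenever `f` is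
`M`-Lipschitz. -/
theorem discreteDelta_consistency_lipschitz (h M X : ℝ) (hh : 0 < h) (hM : 0 ≤ M)
    (f : ℝ → ℝ) (hf : LipschitzWith (Real.toNNReal M) f)
    (d : ℝ → ℝ) (hd : ∀ x, d x = if |x| ≤ h / 2 then 1 / h else 0) :
    |(∫ x, f x * d (x - X)) - f X| ≤ M * h / 4 := by
  simpa [hd, discreteDelta, mul_comm] using discreteDelta_consistency_lipschitz_general hh
    (hf.continuous.continuousOn.integrableOn_compact (isCompact_closedBall X (h / 2)))
    fun x _ ↦ by simpa [Real.dist_eq, hM] using hf.dist_le_mul x X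
end

section
/- Let h > 0, M ≥ 0, and let u : ℝ² → ℝ be four times continuously differentiable on the closed ball of radius h centered at a point (x,y), with ‖D⁴u‖ ≤ M on that ball (the norm of the fourth total derivative bounds all fourth-order partial derivatives). Then the five-point discrete Laplacian satisfies |(u(x−h,y) + u(x+h,y) + u(x,y−h) + u(x,y+h) − 4u(x,y))/h² − Δu(x,y)| ≤ M·h²/6, where Δu = u_xx + u_yy is the Laplacian of u. -/
/-!
Along each coordinate axis, Taylor's formula of order four with steps `h` and `-h` gives the second
difference: the odd terms cancel, the quadratic ones add up to `h ^ 2` times the second derivative,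
and each remainder is at most `M * h ^ 4 / 4!`. Dividing by `h ^ 2` leaves an error of
`M * h ^ 2 / 12` per axis.
-/

open Set Topology
open scoped Nat

section DirectionalDerivatives

variable {𝕜 E F : Type*} [NontriviallyNormedField 𝕜]
  [NormedAddCommGroup E] [NormedSpace 𝕜 E] [NormedAddCommGroup F] [NormedSpace 𝕜 F]
  {N : WithTop ℕ∞} {u : E → F} {s : Set E} {p v : E} {T : Set 𝕜} {t : 𝕜} {k : ℕ}

theorem hasDerivWithinAt_iteratedFDerivWithin_add_smul (hu : ContDiffOn 𝕜 N u s)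
    (hs : UniqueDiffOn 𝕜 s) (hk : k < N) (hT : MapsTo (fun t : 𝕜 ↦ p + t • v) T s) (ht : t ∈ T) :
    HasDerivWithinAt (fun t ↦ iteratedFDerivWithin 𝕜 k u s (p + t • v) fun _ ↦ v)
      (iteratedFDerivWithin 𝕜 (k + 1) u s (p + t • v) fun _ ↦ v) T t := by
  have line_deriv : HasDerivWithinAt (fun t : 𝕜 ↦ p + t • v) v T t := by
    simpa using (((hasDerivAt_id t).smul_const v).const_add p).hasDerivWithinAt
  have deriv_iterated :=
    (hu.differentiableOn_iteratedFDerivWithin hk hs _ (hT ht)).hasFDerivWithinAt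
  exact (deriv_iterated.continuousMultilinear_apply_const fun _ ↦ v).comp_hasDerivWithinAt t
    line_deriv hT

theorem iteratedDeriv_comp_add_smul (hu : ContDiffOn 𝕜 N u s) (hs : UniqueDiffOn 𝕜 s) (hk : k ≤ N)
    (hT : MapsTo (fun t : 𝕜 ↦ p + t • v) T s) (ht : T ∈ 𝓝 t) :
    iteratedDeriv k (fun t ↦ u (p + t • v)) t =
      iteratedFDerivWithin 𝕜 k u s (p + t • v) fun _ ↦ v := by
  induction k generalizing t with
  | zero => simp
  | succ k ih =>
    have hkN : (k : WithTop ℕ∞) < N := lt_of_lt_of_le (mod_cast k.lt_succ_self) hk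
    have eventually_eq : iteratedDeriv k (fun t ↦ u (p + t • v)) =ᶠ[𝓝 t]
        fun t ↦ iteratedFDerivWithin 𝕜 k u s (p + t • v) fun _ ↦ v :=
      (eventually_mem_nhds_iff.2 ht).mono fun _ hr ↦ ih hkN.le hr
    rw [iteratedDeriv_succ, eventually_eq.deriv_eq]
    exact ((hasDerivWithinAt_iteratedFDerivWithin_add_smul hu hs hkN hT
      (mem_of_mem_nhds ht)).hasDerivAt ht).deriv

end DirectionalDerivatives

section Taylor

variable {E F : Type*} [NormedAddCommGroup E] [NormedSpace ℝ E]
  [NormedAddCommGroup F] [NormedSpace ℝ F]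

theorem hasDerivAt_sub_pow_succ_div_factorial {𝕜 : Type*} [NontriviallyNormedField 𝕜] [CharZero 𝕜]
    (a t : 𝕜) (n : ℕ) :
    HasDerivAt (fun t ↦ (t - a) ^ (n + 1) / (n + 1)!) ((t - a) ^ n / n !) t := by
  refine ((((hasDerivAt_id t).sub_const a).pow (n + 1)).div_const _).congr_deriv ?_
  rw [Nat.factorial_succ]
  push_cast
  simp only [id, mul_one]
  field_simp

-- The library bound `taylor_mean_remainder_bound` divides by `(n - 1)!` only; with it the constant
-- `1 / 6` of the truncation error would become `2 / 3`.
theorem norm_sub_sum_le_of_hasDerivWithinAt_succ {f : ℕ → ℝ → F} {a b C : ℝ} {n : ℕ}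
    (hf : ∀ k < n, ∀ t ∈ Icc a b, HasDerivWithinAt (f k) (f (k + 1) t) (Icc a b) t)
    (hC : ∀ t ∈ Icc a b, ‖f n t‖ ≤ C) :
    ∀ t ∈ Icc a b,
      ‖f 0 t - ∑ k ∈ Finset.range n, ((t - a) ^ k / k !) • f k a‖ ≤ C * ((t - a) ^ n / n !) := by
  induction n generalizing f with
  | zero => simpa using hC
  | succ n ih =>
    have deriv_remainder : ∀ t ∈ Icc a b,
        HasDerivWithinAt
          (fun t ↦ f 0 t - ∑ k ∈ Finset.range (n + 1), ((t - a) ^ k / k !) • f k a)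
          (f 1 t - ∑ k ∈ Finset.range n, ((t - a) ^ k / k !) • f (k + 1) a) (Icc a b) t := by
      intro t ht
      simp only [Finset.sum_range_succ', pow_zero, Nat.factorial_zero, Nat.cast_one, div_one,
        one_smul]
      refine (hf 0 n.succ_pos t ht).sub (HasDerivAt.add_const _ ?_).hasDerivWithinAt
      exact HasDerivAt.fun_sum fun k _ ↦
        (hasDerivAt_sub_pow_succ_div_factorial a t k).smul_const _
    have norm_deriv_remainder_le :=
      ih (f := fun k ↦ f (k + 1)) (fun k hk ↦ hf (k + 1) (Nat.succ_lt_succ hk)) hC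
    exact image_norm_le_of_norm_deriv_right_le_deriv_boundary
      (fun t ht ↦ (deriv_remainder t ht).continuousWithinAt)
      (fun t ht ↦ (deriv_remainder t (Ico_subset_Icc_self ht)).mono_of_mem_nhdsWithin
        (Icc_mem_nhdsGE_of_mem ht))
      (by simp [Finset.sum_range_succ'])
      (fun t ↦ (hasDerivAt_sub_pow_succ_div_factorial a t n).const_mul C)
      (fun t ht ↦ norm_deriv_remainder_le t (Ico_subset_Icc_self ht))

variable {u : E → F} {s : Set E} {p v : E} {h M : ℝ} {n : ℕ}

theorem norm_apply_add_smul_sub_sum_iteratedFDerivWithin_le (hh : 0 ≤ h)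
    (hu : ContDiffOn ℝ n u s) (hs : UniqueDiffOn ℝ s)
    (hline : MapsTo (fun t : ℝ ↦ p + t • v) (Icc 0 h) s)
    (hM : ∀ t ∈ Icc 0 h, ‖iteratedFDerivWithin ℝ n u s (p + t • v)‖ ≤ M) :
    ‖u (p + h • v) -
        ∑ k ∈ Finset.range n, (h ^ k / k !) • iteratedFDerivWithin ℝ k u s p fun _ ↦ v‖ ≤
      M * ‖v‖ ^ n * (h ^ n / n !) := by
  have norm_top_deriv_le : ∀ t ∈ Icc 0 h,
      ‖iteratedFDerivWithin ℝ n u s (p + t • v) fun _ ↦ v‖ ≤ M * ‖v‖ ^ n := fun t ht ↦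
    (ContinuousMultilinearMap.le_opNorm_mul_pow_of_le _ (pi_norm_const_le v)).trans <| by
      gcongr
      exact hM t ht
  simpa using norm_sub_sum_le_of_hasDerivWithinAt_succ
    (f := fun k t ↦ iteratedFDerivWithin ℝ k u s (p + t • v) fun _ ↦ v)
    (fun k hk t ht ↦ hasDerivWithinAt_iteratedFDerivWithin_add_smul hu hs (mod_cast hk) hline ht)
    norm_top_deriv_le h (right_mem_Icc.2 hh)

theorem norm_apply_sub_smul_sub_sum_iteratedFDerivWithin_le (hh : 0 ≤ h)
    (hu : ContDiffOn ℝ n u s) (hs : UniqueDiffOn ℝ s)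
    (hline : MapsTo (fun t : ℝ ↦ p - t • v) (Icc 0 h) s)
    (hM : ∀ t ∈ Icc 0 h, ‖iteratedFDerivWithin ℝ n u s (p - t • v)‖ ≤ M) :
    ‖u (p - h • v) -
        ∑ k ∈ Finset.range n, ((-h) ^ k / k !) • iteratedFDerivWithin ℝ k u s p fun _ ↦ v‖ ≤
      M * ‖v‖ ^ n * (h ^ n / n !) := by
  have reflect : ∀ t : ℝ, p - t • v = p + t • -v := fun t ↦ by rw [smul_neg, sub_eq_add_neg]
  have deriv_reflect : ∀ k, h ^ k • (iteratedFDerivWithin ℝ k u s p fun _ ↦ -v) =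
      (-h) ^ k • iteratedFDerivWithin ℝ k u s p fun _ ↦ v := fun k ↦ by
    have deriv_neg : (iteratedFDerivWithin ℝ k u s p fun _ ↦ -v) =
        (-1 : ℝ) ^ k • iteratedFDerivWithin ℝ k u s p fun _ ↦ v := by
      simpa using (iteratedFDerivWithin ℝ k u s p).map_smul_univ (fun _ ↦ (-1 : ℝ)) fun _ ↦ v
    rw [deriv_neg, smul_smul, ← mul_pow, mul_neg_one]
  simp only [reflect] at hline hM ⊢
  simpa only [div_eq_inv_mul, mul_smul, deriv_reflect, norm_neg] using
    norm_apply_add_smul_sub_sum_iteratedFDerivWithin_le hh hu hs hline hM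

theorem norm_second_difference_sub_iteratedFDerivWithin_le (hh : 0 ≤ h)
    (hu : ContDiffOn ℝ 4 u s) (hs : UniqueDiffOn ℝ s)
    (hline : MapsTo (fun t : ℝ ↦ p + t • v) (Icc (-h) h) s)
    (hM : ∀ t ∈ Icc (-h) h, ‖iteratedFDerivWithin ℝ 4 u s (p + t • v)‖ ≤ M) :
    ‖u (p + h • v) + u (p - h • v) - (2 : ℝ) • u p -
        h ^ 2 • iteratedFDerivWithin ℝ 2 u s p fun _ ↦ v‖ ≤ M * ‖v‖ ^ 4 * (h ^ 4 / 12) := by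
  have reflect : ∀ t : ℝ, p - t • v = p + (-t) • v := fun t ↦ by rw [neg_smul, sub_eq_add_neg]
  have forward_mem : ∀ t ∈ Icc 0 h, t ∈ Icc (-h) h := fun t ht ↦ ⟨by linarith [ht.1], ht.2⟩
  have backward_mem : ∀ t ∈ Icc 0 h, -t ∈ Icc (-h) h := fun t ht ↦
    ⟨neg_le_neg ht.2, by linarith [ht.1]⟩
  have backward_line : MapsTo (fun t : ℝ ↦ p - t • v) (Icc 0 h) s := fun t ht ↦ by
    simpa only [reflect] using hline (backward_mem t ht)
  have forward := norm_apply_add_smul_sub_sum_iteratedFDerivWithin_le (n := 4) hh hu hs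
    (fun t ht ↦ hline (forward_mem t ht)) fun t ht ↦ hM t (forward_mem t ht)
  have backward := norm_apply_sub_smul_sub_sum_iteratedFDerivWithin_le (n := 4) hh hu hs
    backward_line fun t ht ↦ by simpa only [reflect] using hM (-t) (backward_mem t ht)
  calc
    _ = ‖(u (p + h • v) -
          ∑ k ∈ Finset.range 4, (h ^ k / k !) • iteratedFDerivWithin ℝ k u s p fun _ ↦ v) +
        (u (p - h • v) -
          ∑ k ∈ Finset.range 4, ((-h) ^ k / k !) • iteratedFDerivWithin ℝ k u s p fun _ ↦ v)‖ := by
        simp only [Finset.sum_range_succ, Finset.sum_range_zero, Nat.factorial,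
          iteratedFDerivWithin_zero_apply]
        congr 1
        module
    _ ≤ M * ‖v‖ ^ 4 * (h ^ 4 / 4 !) + M * ‖v‖ ^ 4 * (h ^ 4 / 4 !) :=
        norm_add_le_of_le forward backward
    _ = M * ‖v‖ ^ 4 * (h ^ 4 / 12) := by
        norm_num only [Nat.factorial]
        ring

theorem norm_second_difference_quotient_sub_deriv_deriv_le (hh : 0 < h)
    (hu : ContDiffOn ℝ 4 u s) (hs : UniqueDiffOn ℝ s)
    (hline : MapsTo (fun t : ℝ ↦ p + t • v) (Icc (-h) h) s)
    (hM : ∀ t ∈ Icc (-h) h, ‖iteratedFDerivWithin ℝ 4 u s (p + t • v)‖ ≤ M) :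
    ‖(h ^ 2)⁻¹ • (u (p + h • v) + u (p - h • v) - (2 : ℝ) • u p) -
        deriv (deriv fun t : ℝ ↦ u (p + t • v)) 0‖ ≤ M * ‖v‖ ^ 4 * (h ^ 2 / 12) := by
  have deriv_deriv_eq : deriv (deriv fun t : ℝ ↦ u (p + t • v)) 0 =
      iteratedFDerivWithin ℝ 2 u s p fun _ ↦ v := by
    simpa [iteratedDeriv_succ] using iteratedDeriv_comp_add_smul (k := 2) hu hs (by norm_num) hline
      (Icc_mem_nhds (neg_lt_zero.2 hh) hh)
  have h_sq_pos : 0 < h ^ 2 := pow_pos hh 2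
  rw [deriv_deriv_eq, ← inv_smul_smul₀ h_sq_pos.ne' (iteratedFDerivWithin ℝ 2 u s p _), ← smul_sub,
    norm_smul, norm_inv, Real.norm_of_nonneg h_sq_pos.le, inv_mul_le_iff₀ h_sq_pos]
  exact (norm_second_difference_sub_iteratedFDerivWithin_le hh.le hu hs hline hM).trans_eq (by ring)

end Taylor

section FivePoint

/-- The union of the two closed grid segments of half-length `h` through `(x, y)`, which join the
centre of the five-point stencil to its other four nodes. -/
def fivePointCross (x y h : ℝ) : Set (ℝ × ℝ) :=
  Metric.closedBall x h ×ˢ {y} ∪ {x} ×ˢ Metric.closedBall y h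

theorem fivePointCross_subset_closedBall {x y h : ℝ} (hh : 0 ≤ h) :
    fivePointCross x y h ⊆ Metric.closedBall (x, y) h := by
  rw [← closedBall_prod_same]
  exact union_subset
    (prod_mono_right (singleton_subset_iff.2 (Metric.mem_closedBall_self hh)))
    (prod_mono_left (singleton_subset_iff.2 (Metric.mem_closedBall_self hh)))

theorem add_smul_fst_mem_fivePointCross {x y h t : ℝ} (ht : t ∈ Icc (-h) h) :
    (x, y) + t • ((1, 0) : ℝ × ℝ) ∈ fivePointCross x y h :=
  .inl (by simpa [Real.dist_eq] using abs_le.2 ht)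

theorem add_smul_snd_mem_fivePointCross {x y h t : ℝ} (ht : t ∈ Icc (-h) h) :
    (x, y) + t • ((0, 1) : ℝ × ℝ) ∈ fivePointCross x y h :=
  .inr (by simpa [Real.dist_eq] using abs_le.2 ht)

theorem uniqueDiffOn_closedBall {E : Type*} [NormedAddCommGroup E] [NormedSpace ℝ E] (p : E)
    {r : ℝ} (hr : 0 < r) : UniqueDiffOn ℝ (Metric.closedBall p r) :=
  uniqueDiffOn_convex (convex_closedBall p r)
    ⟨p, Metric.ball_subset_interior_closedBall (Metric.mem_ball_self hr)⟩

theorem fivePoint_laplacian_truncation_general {F : Type*} [NormedAddCommGroup F] [NormedSpace ℝ F]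
    {h M x y : ℝ} (hh : 0 < h) {u : ℝ × ℝ → F} {s : Set (ℝ × ℝ)} (hs : UniqueDiffOn ℝ s)
    (hu : ContDiffOn ℝ 4 u s) (hcross : fivePointCross x y h ⊆ s)
    (hbd : ∀ p ∈ fivePointCross x y h, ‖iteratedFDerivWithin ℝ 4 u s p‖ ≤ M) :
    ‖(h ^ 2)⁻¹ • (u (x - h, y) + u (x + h, y) + u (x, y - h) + u (x, y + h) - (4 : ℝ) • u (x, y))
        - (deriv (deriv fun t ↦ u (t, y)) x + deriv (deriv fun t ↦ u (x, t)) y)‖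
      ≤ M * h ^ 2 / 6 := by
  have deriv_deriv_translate : ∀ (g : ℝ → F) (c : ℝ),
      deriv (deriv fun t ↦ g (c + t)) 0 = deriv (deriv g) c := fun g c ↦ by
    simpa [iteratedDeriv_succ] using congrFun (iteratedDeriv_comp_const_add 2 g c) 0
  have horizontal : ‖(h ^ 2)⁻¹ • (u (x + h, y) + u (x - h, y) - (2 : ℝ) • u (x, y)) -
      deriv (deriv fun t ↦ u (t, y)) x‖ ≤ M * (h ^ 2 / 12) := by
    simpa [deriv_deriv_translate fun t ↦ u (t, y)] using
      norm_second_difference_quotient_sub_deriv_deriv_le hh hu hs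
        (fun t ht ↦ hcross (add_smul_fst_mem_fivePointCross ht))
        (fun t ht ↦ hbd _ (add_smul_fst_mem_fivePointCross ht))
  have vertical : ‖(h ^ 2)⁻¹ • (u (x, y + h) + u (x, y - h) - (2 : ℝ) • u (x, y)) -
      deriv (deriv fun t ↦ u (x, t)) y‖ ≤ M * (h ^ 2 / 12) := by
    simpa [deriv_deriv_translate fun t ↦ u (x, t)] using
      norm_second_difference_quotient_sub_deriv_deriv_le hh hu hs
        (fun t ht ↦ hcross (add_smul_snd_mem_fivePointCross ht))
        (fun t ht ↦ hbd _ (add_smul_snd_mem_fivePointCross ht))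
  calc
    _ = _ := congrArg norm (by module)
    _ ≤ M * (h ^ 2 / 12) + M * (h ^ 2 / 12) := norm_add_le_of_le horizontal vertical
    _ = M * h ^ 2 / 6 := by ring

end FivePoint

/-- Local truncation error of the five-point discrete Laplacian: if `u : ℝ² → ℝ`
is `C⁴` on the closed ball of radius `h` around `(x,y)` with the fourth
derivative bounded by `M` there, then the five-point difference quotient
approximates the Laplacian `u_xx + u_yy` at `(x,y)` with error `≤ M h² / 6`. -/
theorem fivePoint_laplacian_truncation (h M x y : ℝ) (hh : 0 < h) (hM : 0 ≤ M)
    (u : ℝ × ℝ → ℝ)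
    (hu : ContDiffOn ℝ 4 u (Metric.closedBall (x, y) h))
    (hbd : ∀ p ∈ Metric.closedBall (x, y) h,
      ‖iteratedFDerivWithin ℝ 4 u (Metric.closedBall (x, y) h) p‖ ≤ M) :
    |(u (x - h, y) + u (x + h, y) + u (x, y - h) + u (x, y + h) - 4 * u (x, y)) / h ^ 2
        - (deriv (deriv fun t => u (t, y)) x + deriv (deriv fun t => u (x, t)) y)|
      ≤ M * h ^ 2 / 6 := by
  simpa [div_eq_inv_mul] using fivePoint_laplacian_truncation_general hh
    (uniqueDiffOn_closedBall (x, y) hh) hu (fivePointCross_subset_closedBall hh.le)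
    fun p hp ↦ hbd p (fivePointCross_subset_closedBall hh.le hp)
end

section
/- Let X ∈ ℝ, M ≥ 0, h > 0, and let p⁻, p⁺ : ℝ → ℝ be Lipschitz continuous with Lipschitz constant M. Define p : ℝ → ℝ by p(x) = p⁻(x) for x ≤ X and p(x) = p⁺(x) for x > X. Then for every x with |x − X| ≤ h/2, |(p(x+h) − p(x−h))/(2h) − (p⁺(X) − p⁻(X))/(2h)| ≤ (3/2)·M. That is, the centered difference quotient of the piecewise function p across the jump point equals the jump [p] = p⁺(X) − p⁻(X) times the discrete delta value 1/(2h), up to an O(1) error bounded explicitly by (3/2)M. -/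
/-!
The two evaluation points `x - h` and `x + h` lie on opposite sides of the jump, so their distances
to it add up to exactly `2 * h`. The Lipschitz errors of the two branches therefore add up to at
most `2 * h * M`, and the difference quotient is off by at most `M`.
-/

section Jump

variable {E : Type*} [SeminormedAddCommGroup E]

theorem norm_sub_sub_jump_le {K : NNReal} {f g : ℝ → E} {a b c : ℝ}
    (hf : LipschitzOnWith K f (Set.Iic c)) (hg : LipschitzOnWith K g (Set.Ici c))
    (hac : a ≤ c) (hcb : c ≤ b) :
    ‖(g b - f a) - (g c - f c)‖ ≤ K * (b - a) := by
  have right_error : ‖g b - g c‖ ≤ K * (b - c) := by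
    simpa only [Real.norm_of_nonneg (sub_nonneg.2 hcb)] using
      hg.norm_sub_le hcb Set.self_mem_Ici
  have left_error : ‖f a - f c‖ ≤ K * (c - a) := by
    simpa only [norm_sub_rev a c, Real.norm_of_nonneg (sub_nonneg.2 hac)] using
      hf.norm_sub_le hac Set.self_mem_Iic
  calc
    ‖(g b - f a) - (g c - f c)‖ = ‖(g b - g c) - (f a - f c)‖ := by rw [sub_sub_sub_comm]
    _ ≤ ‖g b - g c‖ + ‖f a - f c‖ := norm_sub_le _ _
    _ ≤ K * (b - c) + K * (c - a) := add_le_add right_error left_error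
    _ = K * (b - a) := by ring

theorem centered_difference_across_jump_general [NormedSpace ℝ E] {X h x : ℝ} {M : NNReal}
    {pm pp p : ℝ → E} (hpm : LipschitzOnWith M pm (Set.Iic X))
    (hpp : LipschitzOnWith M pp (Set.Ici X)) (hp : ∀ y, p y = if y ≤ X then pm y else pp y)
    (hleft : x - h ≤ X) (hright : X < x + h) :
    ‖(2 * h)⁻¹ • (p (x + h) - p (x - h)) - (2 * h)⁻¹ • (pp X - pm X)‖ ≤ M := by
  have two_h_pos : 0 < 2 * h := by linarith
  have numerator_error : ‖(p (x + h) - p (x - h)) - (pp X - pm X)‖ ≤ M * (2 * h) := by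
    rw [hp (x + h), hp (x - h), if_neg hright.not_ge, if_pos hleft]
    convert norm_sub_sub_jump_le hpm hpp hleft hright.le using 2
    ring
  rwa [← smul_sub, norm_smul, norm_inv, Real.norm_of_nonneg two_h_pos.le,
    inv_mul_le_iff₀' two_h_pos]

end Jump

/-- Across a jump point `X` of the piecewise-Lipschitz pressure `p`, the
centered difference quotient equals the jump `[p] = p⁺(X) − p⁻(X)` times the
discrete delta value `1/(2h)`, up to an `O(1)` error bounded by `(3/2)M`. -/
theorem centered_difference_across_jump (X M h : ℝ) (hh : 0 < h) (hM : 0 ≤ M)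
    (pm pp : ℝ → ℝ)
    (hpm : LipschitzWith (Real.toNNReal M) pm)
    (hpp : LipschitzWith (Real.toNNReal M) pp)
    (p : ℝ → ℝ) (hp : ∀ x, p x = if x ≤ X then pm x else pp x) :
    ∀ x : ℝ, |x - X| ≤ h / 2 →
      |(p (x + h) - p (x - h)) / (2 * h) - (pp X - pm X) / (2 * h)| ≤ 3 / 2 * M := by
  intro x hx
  obtain ⟨hlower, hupper⟩ := abs_le.1 hx
  refine le_trans ?_ (by linarith : M ≤ 3 / 2 * M)
  simpa only [div_eq_inv_mul _ (2 * h), smul_eq_mul, Real.norm_eq_abs, Real.coe_toNNReal M hM] using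
    centered_difference_across_jump_general (x := x) (h := h)
      hpm.lipschitzOnWith hpp.lipschitzOnWith hp (by linarith) (by linarith)
end

section
/- Let h > 0, let W ≥ 1 be an integer, let M ≥ 0, and let X ∈ ℝ with X/h not an integer. Let p⁻, p⁺ : ℝ → ℝ be Lipschitz continuous with Lipschitz constant M, and define p : ℝ → ℝ by p(x) = p⁻(x) for x ≤ X and p(x) = p⁺(x) for x > X. Then the set S = { i ∈ ℤ : |i·h − X| ≤ W·h } is finite and nonempty, and | Σ_{i∈S} (p((i+1)·h) − p((i−1)·h))/2 − (p⁺(X) − p⁻(X)) | ≤ 2·(W+1)·M·h. That is, the grid sum of h times the centered difference quotients of p over the band of grid points within distance Wh of the jump point X recovers the jump [p] = p⁺(X) − p⁻(X) to first order in h. -/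
/-!
With `f i = p (i * h)`, the sum of the centered differences `f (i + 1) - f (i - 1)` over consecutive
indices `a ≤ i ≤ b` telescopes to `f (b + 1) + f b - f a - f (a - 1)`. When the indices fill a band
of radius at least `h` about `X`, the two points at the top end lie beyond `X` and the two at the
bottom end lie before it, so half the sum is the difference of an average of values of `p⁺` and an
average of values of `p⁻`. Replacing each of these values by the one at `X` costs the Lipschitz
constant times the distance to `X`.
-/

theorem sum_Icc_centered_sub {G : Type*} [AddCommGroup G] (f : ℤ → G) {a b : ℤ} (hab : a ≤ b) :
    ∑ i ∈ Finset.Icc a b, (f (i + 1) - f (i - 1)) = f (b + 1) + f b - (f a + f (a - 1)) := by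
  induction b, hab using Int.leInduction with
  | base => simp only [Finset.Icc_self, Finset.sum_singleton]; abel
  | succ b hab ih =>
    have hnotMem : b + 1 ∉ Finset.Icc a b := by simp
    rw [← Finset.insert_Icc_right_eq_Icc_add_one (by lia), Finset.sum_insert hnotMem, ih,
      add_sub_cancel_right]
    abel

theorem norm_sum_Icc_half_centered_sub_sub_le {E : Type*} [SeminormedAddCommGroup E]
    [NormedSpace ℝ E] (f : ℤ → E) {a b : ℤ} (hab : a ≤ b) (u v : E) :
    ‖∑ i ∈ Finset.Icc a b, (2⁻¹ : ℝ) • (f (i + 1) - f (i - 1)) - (v - u)‖ ≤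
      2⁻¹ * ((‖f (b + 1) - v‖ + ‖f b - v‖) + (‖f a - u‖ + ‖f (a - 1) - u‖)) := by
  have hsum : ∑ i ∈ Finset.Icc a b, (2⁻¹ : ℝ) • (f (i + 1) - f (i - 1)) - (v - u) =
      (2⁻¹ : ℝ) • (((f (b + 1) - v) + (f b - v)) - ((f a - u) + (f (a - 1) - u))) := by
    rw [← Finset.smul_sum, sum_Icc_centered_sub f hab]
    module
  rw [hsum, norm_smul, Real.norm_of_nonneg (by norm_num)]
  gcongr
  exact (norm_sub_le _ _).trans (add_le_add (norm_add_le _ _) (norm_add_le _ _))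

section GridBand

variable {k : Type*} [Field k] [LinearOrder k] [IsStrictOrderedRing k] [FloorRing k] {h : k}

theorem ceil_div_mul_mem_Ico (hh : 0 < h) (x : k) : ⌈x / h⌉ * h ∈ Set.Ico x (x + h) := by
  refine ⟨(div_le_iff₀ hh).1 (Int.le_ceil _), ?_⟩
  calc
    ⌈x / h⌉ * h < (x / h + 1) * h := by gcongr; exact Int.ceil_lt_add_one _
    _ = x + h := by field_simp

theorem floor_div_mul_mem_Ioc (hh : 0 < h) (x : k) : ⌊x / h⌋ * h ∈ Set.Ioc (x - h) x := by
  refine ⟨?_, (le_div_iff₀ hh).1 (Int.floor_le _)⟩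
  calc
    x - h = (x / h - 1) * h := by field_simp
    _ < ⌊x / h⌋ * h := by gcongr; exact Int.sub_one_lt_floor _

theorem mem_Icc_ceil_floor_div_iff_abs_sub_le (hh : 0 < h) (X r : k) (i : ℤ) :
    i ∈ Finset.Icc ⌈(X - r) / h⌉ ⌊(X + r) / h⌋ ↔ |i * h - X| ≤ r := by
  rw [Finset.mem_Icc, Int.ceil_le, Int.le_floor, div_le_iff₀ hh, le_div_iff₀ hh, sub_le_comm,
    ← sub_le_iff_le_add', and_comm, abs_sub_le_iff]

end GridBand

theorem grid_sum_centered_differences_recovers_jump_general {E : Type*} [SeminormedAddCommGroup E]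
    [NormedSpace ℝ E] {h r X : ℝ} (hh : 0 < h) (hr : h ≤ r) {M : NNReal} {pm pp p : ℝ → E}
    (hpm : LipschitzOnWith M pm (Set.Iic X)) (hpp : LipschitzOnWith M pp (Set.Ici X))
    (hp_left : Set.EqOn p pm (Set.Iio X)) (hp_right : Set.EqOn p pp (Set.Ioi X)) :
    ∃ S : Finset ℤ,
      (∀ i : ℤ, i ∈ S ↔ |i * h - X| ≤ r) ∧
      S.Nonempty ∧
      ‖∑ i ∈ S, (2⁻¹ : ℝ) • (p ((i + 1) * h) - p ((i - 1) * h)) - (pp X - pm X)‖ ≤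
        M * (2 * r + h) := by
  have hleft {x : ℝ} (hx : x < X) : ‖p x - pm X‖ ≤ M * (X - x) := by
    simpa [hp_left hx, abs_of_neg (sub_neg.2 hx)] using hpm.norm_sub_le hx.le Set.self_mem_Iic
  have hright {x : ℝ} (hx : X < x) : ‖p x - pp X‖ ≤ M * (x - X) := by
    simpa [hp_right hx, abs_of_pos (sub_pos.2 hx)] using hpp.norm_sub_le hx.le Set.self_mem_Ici
  obtain ⟨ha_ge, ha_lt⟩ := ceil_div_mul_mem_Ico hh (X - r)
  obtain ⟨hb_gt, hb_le⟩ := floor_div_mul_mem_Ioc hh (X + r)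
  have hmem := mem_Icc_ceil_floor_div_iff_abs_sub_le hh X r
  set a := ⌈(X - r) / h⌉
  set b := ⌊(X + r) / h⌋
  have hab : a ≤ b := by
    have : (a : ℝ) < b := lt_of_mul_lt_mul_right (by linarith) hh.le
    exact_mod_cast this.le
  refine ⟨Finset.Icc a b, hmem, Finset.nonempty_Icc.2 hab, ?_⟩
  calc
    _ ≤ 2⁻¹ * ((‖p ((b + 1) * h) - pp X‖ + ‖p (b * h) - pp X‖) +
          (‖p (a * h) - pm X‖ + ‖p ((a - 1) * h) - pm X‖)) := by
        simpa using norm_sum_Icc_half_centered_sub_sub_le (fun i ↦ p (i * h)) hab (pm X) (pp X)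
    _ ≤ 2⁻¹ * ((M * ((b + 1) * h - X) + M * (b * h - X)) +
          (M * (X - a * h) + M * (X - (a - 1) * h))) := by
        gcongr
        exacts [hright (by linarith), hright (by linarith), hleft (by linarith),
          hleft (by linarith)]
    _ = M * (b * h - a * h + h) := by ring
    _ ≤ M * (2 * r + h) := by gcongr; linarith

/-- Telescoping cancellation near the interface: the grid sum of `h` times the
centered difference quotients of the piecewise-Lipschitz pressure `p`, over the
band of grid points within distance `W h` of the jump point `X`, recovers the
jump `[p] = p⁺(X) − p⁻(X)` to first order in `h`. -/
theorem grid_sum_centered_differences_recovers_jump (h : ℝ) (hh : 0 < h)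
    (W : ℤ) (hW : 1 ≤ W) (M : ℝ) (hM : 0 ≤ M) (X : ℝ)
    (hX : ∀ k : ℤ, X / h ≠ (k : ℝ))
    (pm pp : ℝ → ℝ)
    (hpm : LipschitzWith (Real.toNNReal M) pm)
    (hpp : LipschitzWith (Real.toNNReal M) pp)
    (p : ℝ → ℝ) (hp : ∀ x, p x = if x ≤ X then pm x else pp x) :
    ∃ S : Finset ℤ,
      (∀ i : ℤ, i ∈ S ↔ |(i : ℝ) * h - X| ≤ (W : ℝ) * h) ∧
      S.Nonempty ∧
      |(∑ i ∈ S, (p (((i : ℝ) + 1) * h) - p (((i : ℝ) - 1) * h)) / 2)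
          - (pp X - pm X)| ≤ 2 * ((W : ℝ) + 1) * M * h := by
  have hr : h ≤ W * h := le_mul_of_one_le_left hh.le (mod_cast hW)
  obtain ⟨S, hS, hne, hsum⟩ := grid_sum_centered_differences_recovers_jump_general hh hr
    hpm.lipschitzOnWith hpp.lipschitzOnWith (fun x hx ↦ (hp x).trans (if_pos (le_of_lt hx)))
    (fun x hx ↦ (hp x).trans (if_neg (not_le_of_gt hx)))
  simp only [smul_eq_mul, inv_mul_eq_div, Real.norm_eq_abs, Real.coe_toNNReal M hM] at hsum
  exact ⟨S, hS, hne, hsum.trans (by linarith [mul_nonneg hM hh.le])⟩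
end

section
/- Let R ≥ 1 be a real number. Then there exists a constant C > 0 (depending only on R) such that for every h with 0 < h ≤ 1, the family ((i,j) ↦ h⁶ / ( | √((i·h)² + (j·h)²) − R | + h )⁴) indexed by (i,j) ∈ ℤ × ℤ is summable, and Σ_{(i,j)∈ℤ×ℤ} h⁶ / ( | √((i·h)² + (j·h)²) − R | + h )⁴ ≤ C·h. -/
/-!
Around each point of a `2δ`-separated family place the ball of radius `δ`. These balls are disjoint,
and on each of them the weight `(|‖x‖ - R| + h) ^ (-s)` is comparable to its value at the center,
so the sum of the weight over the family is controlled by its integral over the whole space.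
In polar coordinates that integral is one-dimensional, and since `r ≤ (|R| + h) / h * (|r - R| + h)`
the Jacobian `r ^ (d - 1)` costs a constant factor and `d - 1` powers of decay. The grid points
`(ih, jh)` are the case `δ = h / 2`, `d = 2`, `s = 4`.
-/

open MeasureTheory Metric Module Set

/-- The radial profile `(d + h) ^ (-s)`, where `d = |r - R|` is the distance from radius `r` to
radius `R`. The pressure error sum is that of the profile with `s = 4` over the grid. -/
noncomputable def shellWeight (R h s r : ℝ) : ℝ := (|r - R| + h) ^ (-s)

section ShellWeight

variable {R h s r : ℝ}

lemma shellWeight_nonneg (hh : 0 ≤ h) : 0 ≤ shellWeight R h s r := by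
  unfold shellWeight
  positivity

lemma measurable_shellWeight : Measurable (shellWeight R h s) := by
  unfold shellWeight
  fun_prop

lemma pow_mul_shellWeight_le (hh : 0 < h) (hr : 0 ≤ r) (k : ℕ) :
    r ^ k * shellWeight R h s r ≤ ((|R| + h) / h) ^ k * shellWeight R h (s - k) r := by
  have hd : 0 < |r - R| + h := by positivity
  have hr_le : r ≤ (|R| + h) / h * (|r - R| + h) := by
    have : r - R ≤ |r - R| := le_abs_self _
    have : R ≤ |R| := le_abs_self _
    have : 0 ≤ |R| / h * |r - R| := by positivity
    calc r ≤ |R| / h * |r - R| + |r - R| + (|R| + h) := by linarith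
      _ = (|R| + h) / h * (|r - R| + h) := by field_simp
  have hexp : -(s - k) = k + -s := by ring
  calc r ^ k * shellWeight R h s r
      ≤ ((|R| + h) / h * (|r - R| + h)) ^ k * shellWeight R h s r := by
        gcongr
        exact shellWeight_nonneg hh.le
    _ = ((|R| + h) / h) ^ k * shellWeight R h (s - k) r := by
        rw [shellWeight, shellWeight, hexp, Real.rpow_add hd, Real.rpow_natCast, mul_pow, mul_assoc]

lemma shellWeight_le_of_abs_sub_le {δ r' : ℝ} (hh : 0 < h) (hs : 0 ≤ s) (hrr' : |r' - r| ≤ δ) :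
    shellWeight R h s r ≤ (1 + δ / h) ^ s * shellWeight R h s r' := by
  have hδ : 0 ≤ δ := (abs_nonneg _).trans hrr'
  have hd : 0 < |r - R| + h := by positivity
  have hd_le : |r' - R| + h ≤ (1 + δ / h) * (|r - R| + h) := by
    have : |r' - R| ≤ |r' - r| + |r - R| := abs_sub_le _ _ _
    have : 0 ≤ δ / h * |r - R| := by positivity
    calc |r' - R| + h ≤ |r - R| + h + δ / h * |r - R| + δ := by linarith
      _ = (1 + δ / h) * (|r - R| + h) := by
        field_simp
        ring
  calc shellWeight R h s r
      = (1 + δ / h) ^ s * ((1 + δ / h) * (|r - R| + h)) ^ (-s) := by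
        rw [Real.mul_rpow (by positivity) hd.le, ← mul_assoc, ← Real.rpow_add (by positivity),
          add_neg_cancel, Real.rpow_zero, one_mul, shellWeight]
    _ ≤ (1 + δ / h) ^ s * shellWeight R h s r' := by
        gcongr
        exact Real.rpow_le_rpow_of_nonpos (by positivity) hd_le (neg_nonpos.2 hs)

lemma integrable_shellWeight (hh : 0 < h) (hs : 1 < s) : Integrable (shellWeight R h s) := by
  have hhalf : IntegrableOn (fun t : ℝ ↦ (t + h) ^ (-s)) (Ioi 0) :=
    integrableOn_add_rpow_Ioi_of_lt (by linarith) (by linarith)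
  have habs : Integrable (fun t : ℝ ↦ (‖t‖ + h) ^ (-s)) :=
    (integrable_fun_norm_addHaar volume (f := fun t ↦ (t + h) ^ (-s))).2 (by simpa using hhalf)
  exact habs.comp_sub_right R

lemma integral_shellWeight (hh : 0 < h) (hs : 1 < s) :
    ∫ r, shellWeight R h s r = 2 * (h ^ (1 - s) / (s - 1)) := by
  have hshift : ∫ t in Ioi 0, (t + h) ^ (-s) = ∫ t in Ioi h, t ^ (-s) := by
    simpa using (measurePreserving_add_right volume h).setIntegral_preimage_emb
      (measurableEmbedding_addRight h) (fun t ↦ t ^ (-s)) (Ioi h)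
  calc ∫ r, shellWeight R h s r = ∫ t, (|t| + h) ^ (-s) :=
        integral_sub_right_eq_self (fun t ↦ (|t| + h) ^ (-s)) R
    _ = 2 * ∫ t in Ioi 0, (t + h) ^ (-s) := integral_comp_abs (f := fun t ↦ (t + h) ^ (-s))
    _ = 2 * (h ^ (1 - s) / (s - 1)) := by
        rw [hshift, integral_Ioi_rpow_of_lt (by linarith) hh, neg_div, ← div_neg]
        ring_nf

lemma integrableOn_pow_mul_shellWeight {k : ℕ} (hh : 0 < h) (hs : k + 1 < s) :
    IntegrableOn (fun r ↦ r ^ k * shellWeight R h s r) (Ioi 0) := by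
  have hmajorant : Integrable fun r ↦ ((|R| + h) / h) ^ k * shellWeight R h (s - k) r :=
    (integrable_shellWeight hh (by linarith)).const_mul _
  refine hmajorant.integrableOn.mono'
    ((measurable_id.pow_const k).mul measurable_shellWeight).aestronglyMeasurable ?_
  filter_upwards [ae_restrict_mem measurableSet_Ioi] with r (hr : 0 < r)
  rw [Real.norm_of_nonneg (mul_nonneg (by positivity) (shellWeight_nonneg hh.le))]
  exact pow_mul_shellWeight_le hh hr.le k

lemma setIntegral_pow_mul_shellWeight_le {k : ℕ} (hh : 0 < h) (hs : k + 1 < s) :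
    ∫ r in Ioi 0, r ^ k * shellWeight R h s r ≤
      ((|R| + h) / h) ^ k * (2 * (h ^ (k + 1 - s) / (s - (k + 1)))) := by
  have hs' : 1 < s - k := by linarith
  have hint := (integrable_shellWeight (R := R) hh hs').const_mul (((|R| + h) / h) ^ k)
  calc ∫ r in Ioi 0, r ^ k * shellWeight R h s r
      ≤ ∫ r in Ioi 0, ((|R| + h) / h) ^ k * shellWeight R h (s - k) r :=
        setIntegral_mono_on (integrableOn_pow_mul_shellWeight hh hs) hint.integrableOn
          measurableSet_Ioi fun r hr ↦ pow_mul_shellWeight_le hh (le_of_lt hr) k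
    _ ≤ ∫ r, ((|R| + h) / h) ^ k * shellWeight R h (s - k) r :=
        setIntegral_le_integral hint <| .of_forall fun r ↦
          mul_nonneg (by positivity) (shellWeight_nonneg hh.le)
    _ = ((|R| + h) / h) ^ k * (2 * (h ^ (k + 1 - s) / (s - (k + 1)))) := by
        rw [integral_const_mul, integral_shellWeight hh hs']
        ring_nf

end ShellWeight

section Packing

lemma sum_mul_measureReal_le_integral {α X : Type*} [MeasurableSpace X] {μ : Measure X}
    {f : X → ℝ} (hf : Integrable f μ) (hf0 : 0 ≤ f) {S : α → Set X} {c : α → ℝ}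
    (hmeas : ∀ a, MeasurableSet (S a)) (hfin : ∀ a, μ (S a) ≠ ⊤)
    (hdisj : Pairwise (Function.onFun Disjoint S)) (hc : ∀ a, ∀ x ∈ S a, c a ≤ f x)
    (t : Finset α) :
    ∑ a ∈ t, c a * μ.real (S a) ≤ ∫ x, f x ∂μ :=
  calc ∑ a ∈ t, c a * μ.real (S a)
      ≤ ∑ a ∈ t, ∫ x in S a, f x ∂μ := Finset.sum_le_sum fun a _ ↦
        setIntegral_ge_of_const_le_real (hmeas a) (hfin a) (hc a) hf.integrableOn
    _ = ∫ x in ⋃ a ∈ t, S a, f x ∂μ := (integral_biUnion_finset t (fun a _ ↦ hmeas a)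
        (hdisj.set_pairwise _) fun _ _ ↦ hf.integrableOn).symm
    _ ≤ ∫ x, f x ∂μ := setIntegral_le_integral hf (.of_forall hf0)

variable {E : Type*} [NormedAddCommGroup E] [NormedSpace ℝ E] [FiniteDimensional ℝ E]
  {R h s : ℝ}

section Haar

variable [Nontrivial E] [MeasurableSpace E] [BorelSpace E] (μ : Measure E) [μ.IsAddHaarMeasure]

lemma integrable_shellWeight_norm (hh : 0 < h) (hs : finrank ℝ E < s) :
    Integrable (fun x : E ↦ shellWeight R h s ‖x‖) μ := by
  refine (integrable_fun_norm_addHaar μ).2 (integrableOn_pow_mul_shellWeight hh ?_)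
  rwa [← Nat.cast_add_one, Nat.sub_add_cancel finrank_pos]

lemma integral_shellWeight_norm_le (hh : 0 < h) (hs : finrank ℝ E < s) :
    ∫ x : E, shellWeight R h s ‖x‖ ∂μ ≤ finrank ℝ E * μ.real (ball 0 1) *
      (((|R| + h) / h) ^ (finrank ℝ E - 1) *
        (2 * (h ^ (finrank ℝ E - s) / (s - finrank ℝ E)))) := by
  have hdim : ((finrank ℝ E - 1 : ℕ) : ℝ) + 1 = finrank ℝ E := by
    rw [← Nat.cast_add_one, Nat.sub_add_cancel finrank_pos]
  have hradial := setIntegral_pow_mul_shellWeight_le (R := R) hh (hdim.trans_lt hs)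
  rw [hdim] at hradial
  rw [integral_fun_norm_addHaar, nsmul_eq_mul, smul_eq_mul, ← mul_assoc]
  exact mul_le_mul_of_nonneg_left hradial (by positivity)

end Haar

lemma sum_shellWeight_norm_le [Nontrivial E] {α : Type*} {p : α → E} {δ : ℝ} (hδ : 0 < δ)
    (hp : Pairwise fun a b ↦ 2 * δ ≤ dist (p a) (p b)) (hh : 0 < h) (hs : finrank ℝ E < s)
    (t : Finset α) :
    ∑ a ∈ t, shellWeight R h s ‖p a‖ ≤ (1 + δ / h) ^ s * (finrank ℝ E / δ ^ finrank ℝ E) *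
      (((|R| + h) / h) ^ (finrank ℝ E - 1) *
        (2 * (h ^ (finrank ℝ E - s) / (s - finrank ℝ E)))) := by
  borelize E
  let μ : Measure E := Measure.addHaar
  set v := μ.real (ball 0 1)
  set I := ((|R| + h) / h) ^ (finrank ℝ E - 1) *
    (2 * (h ^ (finrank ℝ E - s) / (s - finrank ℝ E)))
  have hv : 0 < v :=
    ENNReal.toReal_pos (measure_ball_pos μ 0 one_pos).ne' measure_ball_lt_top.ne
  have hball : ∀ a, μ.real (ball (p a) δ) = δ ^ finrank ℝ E * v := fun a ↦ by
    rw [measureReal_def, μ.addHaar_ball_of_pos _ hδ, ENNReal.toReal_mul,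
      ENNReal.toReal_ofReal (by positivity), ← measureReal_def]
  have hdisj : Pairwise (Function.onFun Disjoint fun a ↦ ball (p a) δ) := fun a b hab ↦
    ball_disjoint_ball (by linarith [hp hab])
  have hcenter : ∀ a, ∀ x ∈ ball (p a) δ,
      shellWeight R h s ‖p a‖ ≤ (1 + δ / h) ^ s * shellWeight R h s ‖x‖ := fun a x hx ↦
    shellWeight_le_of_abs_sub_le hh ((Nat.cast_nonneg _).trans hs.le) <|
      (abs_norm_sub_norm_le x (p a)).trans (mem_ball_iff_norm.1 hx).le
  have hpack := sum_mul_measureReal_le_integral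
    ((integrable_shellWeight_norm (R := R) μ hh hs).const_mul ((1 + δ / h) ^ s))
    (fun x ↦ mul_nonneg (by positivity) (shellWeight_nonneg hh.le))
    (fun a ↦ measurableSet_ball) (fun a ↦ measure_ball_lt_top.ne) hdisj hcenter t
  simp only [hball, ← Finset.sum_mul, integral_const_mul] at hpack
  rw [← le_div_iff₀ (by positivity)] at hpack
  calc ∑ a ∈ t, shellWeight R h s ‖p a‖
      ≤ (1 + δ / h) ^ s * (∫ x : E, shellWeight R h s ‖x‖ ∂μ) / (δ ^ finrank ℝ E * v) := hpack
    _ ≤ (1 + δ / h) ^ s * (finrank ℝ E * v * I) / (δ ^ finrank ℝ E * v) := by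
        gcongr
        exact integral_shellWeight_norm_le μ hh hs
    _ = (1 + δ / h) ^ s * (finrank ℝ E / δ ^ finrank ℝ E) * I := by field_simp

end Packing

/-- The point `(ih, jh)` of the square grid of mesh `h`, encoded as a complex number so that its
norm is the Euclidean one. -/
def gridPoint (h : ℝ) (q : ℤ × ℤ) : ℂ := ⟨q.1 * h, q.2 * h⟩

section Grid

variable {h : ℝ}

lemma norm_gridPoint (h : ℝ) (q : ℤ × ℤ) :
    ‖gridPoint h q‖ = √((q.1 * h) ^ 2 + (q.2 * h) ^ 2) :=
  Complex.norm_eq_sqrt_sq_add_sq _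

lemma le_abs_intCast_mul_sub (hh : 0 ≤ h) {m n : ℤ} (hmn : m ≠ n) : h ≤ |m * h - n * h| := by
  have hone : (1 : ℝ) ≤ |(m : ℝ) - n| := by exact_mod_cast Int.one_le_abs (sub_ne_zero.2 hmn)
  rw [← sub_mul, abs_mul, abs_of_nonneg hh]
  exact le_mul_of_one_le_left hh hone

lemma pairwise_le_dist_gridPoint (hh : 0 ≤ h) :
    Pairwise fun q q' ↦ h ≤ dist (gridPoint h q) (gridPoint h q') := by
  intro q q' hne
  rw [dist_eq_norm]
  by_cases hfst : q.1 = q'.1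
  · have hsnd : q.2 ≠ q'.2 := fun hsnd ↦ hne (Prod.ext hfst hsnd)
    exact (le_abs_intCast_mul_sub hh hsnd).trans
      (Complex.abs_im_le_norm (gridPoint h q - gridPoint h q'))
  · exact (le_abs_intCast_mul_sub hh hfst).trans
      (Complex.abs_re_le_norm (gridPoint h q - gridPoint h q'))

-- `81 / 2` is `(1 + δ / h) ^ 4 * (2 / (δ / h) ^ 2) * (2 / (4 - 2))` at `δ = h / 2`.
lemma sum_shellWeight_norm_gridPoint_le (R : ℝ) (hh : 0 < h) (t : Finset (ℤ × ℤ)) :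
    ∑ q ∈ t, shellWeight R h 4 ‖gridPoint h q‖ ≤ 81 / 2 * (|R| + h) / h ^ 5 := by
  have hsep : Pairwise fun q q' ↦ 2 * (h / 2) ≤ dist (gridPoint h q) (gridPoint h q') := by
    simpa only [mul_div_cancel₀ h two_ne_zero] using pairwise_le_dist_gridPoint hh.le
  have hsum := sum_shellWeight_norm_le (R := R) (half_pos hh) hsep hh (s := 4)
    (by norm_num [Complex.finrank_real_complex]) t
  have hpow : h ^ (-2 : ℝ) = (h ^ 2)⁻¹ := by
    rw [Real.rpow_neg hh.le, Real.rpow_ofNat]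
  have hratio : 1 + h / 2 / h = 3 / 2 := by
    field_simp
    norm_num
  norm_num [Complex.finrank_real_complex, hratio, hpow] at hsum
  refine hsum.trans_eq ?_
  field_simp
  norm_num

end Grid

theorem pressure_error_l2_sum_general (R : ℝ) {h : ℝ} (hh : 0 < h) :
    Summable (fun q : ℤ × ℤ ↦
      h ^ 6 / (|√((q.1 * h) ^ 2 + (q.2 * h) ^ 2) - R| + h) ^ 4) ∧
    ∑' q : ℤ × ℤ, h ^ 6 / (|√((q.1 * h) ^ 2 + (q.2 * h) ^ 2) - R| + h) ^ 4 ≤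
      81 / 2 * (|R| + h) * h := by
  have hterm : ∀ q : ℤ × ℤ, h ^ 6 / (|√((q.1 * h) ^ 2 + (q.2 * h) ^ 2) - R| + h) ^ 4 =
      h ^ 6 * shellWeight R h 4 ‖gridPoint h q‖ := fun q ↦ by
    rw [norm_gridPoint, shellWeight, Real.rpow_neg (by positivity), Real.rpow_ofNat, div_eq_mul_inv]
  have hnonneg : ∀ q, 0 ≤ h ^ 6 * shellWeight R h 4 ‖gridPoint h q‖ := fun q ↦
    mul_nonneg (by positivity) (shellWeight_nonneg hh.le)
  have hsum : ∀ t : Finset (ℤ × ℤ), ∑ q ∈ t, h ^ 6 * shellWeight R h 4 ‖gridPoint h q‖ ≤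
      81 / 2 * (|R| + h) * h := fun t ↦ by
    calc ∑ q ∈ t, h ^ 6 * shellWeight R h 4 ‖gridPoint h q‖
        ≤ h ^ 6 * (81 / 2 * (|R| + h) / h ^ 5) := by
          rw [← Finset.mul_sum]
          gcongr
          exact sum_shellWeight_norm_gridPoint_le R hh t
      _ = 81 / 2 * (|R| + h) * h := by field_simp
  simp only [hterm]
  exact ⟨summable_of_sum_le hnonneg hsum, Real.tsum_le_of_sum_le hnonneg hsum⟩

/-- The discrete `L²` sum of the squared pointwise pressure error bound: the
family `h⁶/(d_{ij}+h)⁴`, where `d_{ij}` is the distance from the grid point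
`(ih, jh)` to the circle of radius `R`, is summable over `ℤ × ℤ` with total sum
at most `C h`, uniformly for `0 < h ≤ 1`. -/
theorem pressure_error_l2_sum (R : ℝ) (hR : 1 ≤ R) :
    ∃ C : ℝ, 0 < C ∧ ∀ h : ℝ, 0 < h → h ≤ 1 →
      Summable (fun q : ℤ × ℤ =>
        h ^ 6 / (|Real.sqrt (((q.1 : ℝ) * h) ^ 2 + ((q.2 : ℝ) * h) ^ 2) - R| + h) ^ 4) ∧
      (∑' q : ℤ × ℤ,
        h ^ 6 / (|Real.sqrt (((q.1 : ℝ) * h) ^ 2 + ((q.2 : ℝ) * h) ^ 2) - R| + h) ^ 4)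
        ≤ C * h := by
  refine ⟨81 / 2 * (|R| + 1), by positivity, fun h hh hh1 ↦ ?_⟩
  exact (pressure_error_l2_sum_general R hh).imp_right fun hle ↦ hle.trans (by gcongr)
end
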